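/- arXiv:1502.07415 — 11 statements merged into one kernel-verified Lean document; each statement's English description precedes it below -/
import Mathlib

section
/- Let 𝕜 be a field of characteristic zero and N ≥ 2 an integer. For every (j,z) ∈ {1,…,⌊(N+1)/2⌋} × 𝕜^×, the set {(i,x) ∈ {1,…,N} × 𝕜^× : π_A(i,x) ∼ (j,z)} has exactly two elements; in other words, π_A induces a 2-to-1 map from {1,…,N} × 𝕜^× onto the set of ∼-equivalence classes. -/
/-!
The fiber over the class of `(j, z)` is found explicitly. Write `m = (N + 1) / 2`.

If `N` is odd and `j = m`, the reflection `i ↦ N + 1 - i` fixes `m`, so only `i = m` can reach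
the row `m`, and the fiber is `{(m, z), (m, -z)}`; its points differ because the characteristic
is not two. Otherwise `N + 1 - j > m`, the relation on the row `j` is equality, and each branch
of `piA` contributes one point: `(j, z)` and `(N + 1 - j, (-1) ^ N * z)`.
-/

noncomputable section

variable {𝕜 : Type*} [Field 𝕜]

/-- The 2:1 map `π_{A_N^{(1)}}` on pairs (index of fundamental weight, spectral parameter):
`π_A(i,x) = (i,x)` if `i ≤ ⌊(N+1)/2⌋` and `π_A(i,x) = (N+1−i, (−1)^N x)` otherwise. -/
def piA (N : ℤ) (p : ℤ × 𝕜) : ℤ × 𝕜 :=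
  if p.1 ≤ (N + 1) / 2 then p else (N + 1 - p.1, (-1 : 𝕜) ^ N * p.2)

/-- The equivalence relation on `{1,…,⌊(N+1)/2⌋} × 𝕜ˣ` whose classes parametrize the
evaluation fundamental modules `V(ϖ_i)_x` of `U_q'(A_N^{(2)})`:
`(i,x) ∼ (j,y)` iff `i = j` and (`x = y`, or `N` is odd, `i = (N+1)/2` and `x = −y`). -/
def simA (N : ℤ) (p q : ℤ × 𝕜) : Prop :=
  p.1 = q.1 ∧ (p.2 = q.2 ∨ (Odd N ∧ p.1 = (N + 1) / 2 ∧ p.2 = -q.2))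

/-- Proposition (prop: quiver iso)(i), type A, vertex part: for every
`(j,z) ∈ {1,…,⌊(N+1)/2⌋} × 𝕜ˣ`, the set of `(i,x) ∈ {1,…,N} × 𝕜ˣ` with
`π_A(i,x) ∼ (j,z)` has exactly two elements, i.e. `π_A` is 2-to-1 onto the
set of `∼`-equivalence classes. -/
theorem statement0 (𝕜 : Type*) [Field 𝕜] [CharZero 𝕜] (N : ℤ) (hN : 2 ≤ N)
    (j : ℤ) (z : 𝕜) (hj1 : 1 ≤ j) (hj2 : j ≤ (N + 1) / 2) (hz : z ≠ 0) :
    {p : ℤ × 𝕜 | (1 ≤ p.1 ∧ p.1 ≤ N) ∧ p.2 ≠ 0 ∧ simA N (piA N p) (j, z)}.ncard = 2 := by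
  rw [Set.ncard_eq_two]
  have hss : (-1 : 𝕜) ^ N * (-1 : 𝕜) ^ N = 1 := by
    rw [← mul_zpow]; simp
  have hs0 : (-1 : 𝕜) ^ N ≠ 0 := left_ne_zero_of_mul_eq_one hss
  by_cases h : Odd N ∧ j = (N + 1) / 2
  · obtain ⟨hodd, hj⟩ := h
    refine ⟨(j, z), (j, -z), fun e => hz (self_eq_neg.mp (Prod.ext_iff.mp e).2), ?_⟩
    ext ⟨i, x⟩
    simp only [Set.mem_ofPred_eq, Set.mem_insert_iff, Set.mem_singleton_iff, Prod.mk.injEq,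
      simA, piA]
    constructor
    · rintro ⟨-, -, h⟩
      split_ifs at h with hi
      · obtain ⟨h1, h2 | ⟨-, -, h2⟩⟩ := h
        · exact Or.inl ⟨h1, h2⟩
        · exact Or.inr ⟨h1, h2⟩
      · -- the second branch never meets the middle row: `i > m` gives `N + 1 - i < m`
        obtain ⟨k, rfl⟩ := hodd
        have h1 := h.1
        dsimp only at h1
        omega
    · rintro (⟨rfl, rfl⟩ | ⟨rfl, rfl⟩)
      · rw [if_pos hj2]
        exact ⟨⟨hj1, by omega⟩, hz, rfl, Or.inl rfl⟩
      · rw [if_pos hj2]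
        exact ⟨⟨hj1, by omega⟩, neg_ne_zero.mpr hz, rfl, Or.inr ⟨hodd, hj, rfl⟩⟩
  · have hlt : (N + 1) / 2 < N + 1 - j := by
      rcases Int.even_or_odd N with ⟨k, hk⟩ | hodd
      · omega
      · have : j ≠ (N + 1) / 2 := fun e => h ⟨hodd, e⟩
        omega
    refine ⟨(j, z), (N + 1 - j, (-1 : 𝕜) ^ N * z), fun e => ?_, ?_⟩
    · have := (Prod.ext_iff.mp e).1
      dsimp only at this
      omega
    ext ⟨i, x⟩
    simp only [Set.mem_ofPred_eq, Set.mem_insert_iff, Set.mem_singleton_iff, Prod.mk.injEq,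
      simA, piA]
    constructor
    · rintro ⟨-, -, h'⟩
      split_ifs at h' with hi
      · obtain ⟨h1, h2 | ⟨ho, hm, -⟩⟩ := h'
        · exact Or.inl ⟨h1, h2⟩
        · exact absurd ⟨ho, h1.symm.trans hm⟩ h
      · obtain ⟨h1, h2 | ⟨ho, hm, -⟩⟩ := h'
        · dsimp only at h1 h2
          refine Or.inr ⟨by omega, ?_⟩
          rw [← h2, ← mul_assoc, hss, one_mul]
        · exact absurd ⟨ho, h1.symm.trans hm⟩ h
    · rintro (⟨rfl, rfl⟩ | ⟨rfl, rfl⟩)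
      · rw [if_pos hj2]
        exact ⟨⟨hj1, by omega⟩, hz, rfl, Or.inl rfl⟩
      · rw [if_neg (not_le.mpr hlt)]
        refine ⟨⟨by omega, by omega⟩, mul_ne_zero hs0 hz, by simp, Or.inl ?_⟩
        rw [← mul_assoc, hss, one_mul]
end
end

section
/- Let 𝕜 be a field of characteristic zero containing an element ι with ι² = −1, and let N ≥ 4. For every (j,z) ∈ {1,…,N−1} × 𝕜^×, the set {(i,x) ∈ {1,…,N} × 𝕜^× : π_D(i,x) ∼ (j,z)} has exactly two elements; in other words, π_D induces a 2-to-1 map from {1,…,N} × 𝕜^× onto the set of ∼-equivalence classes. -/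
/-!
The index and the spectral parameter decouple. Below the last two indices, `π_D` keeps the index
and rescales the parameter by the unit `ι^{N−i}`, so a class `{(j,z), (j,−z)}` with `j ≤ N−2` has
the two preimages `(j, ±ι^{−(N−j)} z)`, distinct because `2z ≠ 0` (`fiber_of_le`).
The class of `(N−1,z)` is a singleton, and it is hit once from each of the indices `N−1` and `N`,
since `(−1)^i` is its own inverse (`fiber_last`).
-/

noncomputable section

variable {𝕜 : Type*} [Field 𝕜]

/-- The 2:1 map `π_{D_N^{(1)}}` on pairs (index of fundamental weight, spectral parameter),
for a fixed `ι` with `ι² = −1`: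
`π_D(i,x) = (i, ι^{N−i} x)` for `1 ≤ i ≤ N−2` and `π_D(i,x) = (N−1, (−1)^i x)` for
`i ∈ {N−1, N}`. -/
def piD (ι : 𝕜) (N : ℤ) (p : ℤ × 𝕜) : ℤ × 𝕜 :=
  if p.1 ≤ N - 2 then (p.1, ι ^ (N - p.1) * p.2) else (N - 1, (-1 : 𝕜) ^ p.1 * p.2)

/-- The equivalence relation on `{1,…,N−1} × 𝕜ˣ` whose classes parametrize the
evaluation fundamental modules `V(ϖ_i)_x` of `U_q'(D_N^{(2)})`:
`(i,x) ∼ (j,y)` iff `i = j` and (`x = y`, or `i ≤ N−2` and `x = −y`). -/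
def simD (N : ℤ) (p q : ℤ × 𝕜) : Prop :=
  p.1 = q.1 ∧ (p.2 = q.2 ∨ (p.1 ≤ N - 2 ∧ p.2 = -q.2))

/-- The fibre over the class `{(j,z), (j,−z)}` for an index `j ≤ N−2`. -/
lemma fiber_of_le {ι : 𝕜} (hι : ι ≠ 0) {N j : ℤ} {z : 𝕜} (hj1 : 1 ≤ j) (hj : j ≤ N - 2)
    (hz : z ≠ 0) :
    {p : ℤ × 𝕜 | (1 ≤ p.1 ∧ p.1 ≤ N) ∧ p.2 ≠ 0 ∧ simD N (piD ι N p) (j, z)} =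
      {(j, (ι ^ (N - j))⁻¹ * z), (j, -((ι ^ (N - j))⁻¹ * z))} := by
  have hc : ι ^ (N - j) ≠ 0 := zpow_ne_zero _ hι
  ext ⟨i, x⟩
  simp only [Set.mem_ofPred_eq, Set.mem_insert_iff, Set.mem_singleton_iff, Prod.mk.injEq,
    simD, piD]
  constructor
  · rintro ⟨-, -, h⟩
    split_ifs at h with hi
    · obtain ⟨rfl, h | ⟨-, h⟩⟩ := h
      · exact Or.inl ⟨rfl, (eq_inv_mul_iff_mul_eq₀ hc).2 h⟩
      · refine Or.inr ⟨rfl, ?_⟩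
        rw [← mul_neg]
        exact (eq_inv_mul_iff_mul_eq₀ hc).2 h
    · have := h.1
      dsimp only at this
      omega
  · rintro (⟨rfl, rfl⟩ | ⟨rfl, rfl⟩) <;> simp [hj, hc, hz, hj1] <;> omega

/-- The fibre over the singleton class of `(N−1,z)`. -/
lemma fiber_last (ι : 𝕜) {N : ℤ} {z : 𝕜} (hN : 2 ≤ N) (hz : z ≠ 0) :
    {p : ℤ × 𝕜 | (1 ≤ p.1 ∧ p.1 ≤ N) ∧ p.2 ≠ 0 ∧ simD N (piD ι N p) (N - 1, z)} =
      {(N - 1, (-1) ^ (N - 1) * z), (N, (-1) ^ N * z)} := by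
  have hs (i : ℤ) (x : 𝕜) : (-1 : 𝕜) ^ i * ((-1) ^ i * x) = x := by
    rw [← mul_assoc, ← mul_zpow]
    simp
  have hne (i : ℤ) : (-1 : 𝕜) ^ i ≠ 0 := zpow_ne_zero _ (by simp)
  have h1 : ¬ N - 1 ≤ N - 2 := by omega
  have h2 : ¬ N ≤ N - 2 := by omega
  ext ⟨i, x⟩
  simp only [Set.mem_ofPred_eq, Set.mem_insert_iff, Set.mem_singleton_iff, Prod.mk.injEq,
    simD, piD]
  constructor
  · rintro ⟨⟨-, hiN⟩, -, h⟩
    split_ifs at h with hi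
    · have := h.1
      dsimp only at this
      omega
    · obtain ⟨-, h | ⟨h, -⟩⟩ := h
      · dsimp only at h
        have hx : x = (-1) ^ i * z := by rw [← h, hs]
        obtain rfl | rfl : i = N - 1 ∨ i = N := by omega
        · exact Or.inl ⟨rfl, hx⟩
        · exact Or.inr ⟨rfl, hx⟩
      · exact absurd h h1
  · rintro (⟨rfl, rfl⟩ | ⟨rfl, rfl⟩)
    · rw [if_neg h1]
      exact ⟨⟨by omega, by omega⟩, mul_ne_zero (hne _) hz, rfl, Or.inl (hs _ _)⟩
    · rw [if_neg h2]
      exact ⟨⟨by omega, le_rfl⟩, mul_ne_zero (hne _) hz, rfl, Or.inl (hs _ _)⟩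

/-- Proposition (prop: quiver iso)(i), type D, vertex part: for every
`(j,z) ∈ {1,…,N−1} × 𝕜ˣ`, the set of `(i,x) ∈ {1,…,N} × 𝕜ˣ` with
`π_D(i,x) ∼ (j,z)` has exactly two elements, i.e. `π_D` is 2-to-1 onto the
set of `∼`-equivalence classes. -/
theorem statement1 (𝕜 : Type*) [Field 𝕜] [CharZero 𝕜] (ι : 𝕜) (hι : ι ^ 2 = -1)
    (N : ℤ) (hN : 4 ≤ N)
    (j : ℤ) (z : 𝕜) (hj1 : 1 ≤ j) (hj2 : j ≤ N - 1) (hz : z ≠ 0) :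
    {p : ℤ × 𝕜 | (1 ≤ p.1 ∧ p.1 ≤ N) ∧ p.2 ≠ 0 ∧ simD N (piD ι N p) (j, z)}.ncard = 2 := by
  have hι0 : ι ≠ 0 := by
    rintro rfl
    simp at hι
  by_cases hj : j ≤ N - 2
  · rw [fiber_of_le hι0 hj1 hj hz]
    refine Set.ncard_pair fun h => ?_
    exact mul_ne_zero (inv_ne_zero (zpow_ne_zero _ hι0)) hz (self_eq_neg.1 (Prod.ext_iff.1 h).2)
  · obtain rfl : j = N - 1 := by omega
    rw [fiber_last ι (by omega) hz]
    refine Set.ncard_pair fun h => ?_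
    have := (Prod.ext_iff.1 h).1
    dsimp only at this
    omega
end
end

section
/- Let N ≥ 2 and let (i,x), (j,y) ∈ {1,…,N} × 𝕜^×; write (i',x') = π_A(i,x) and (j',y') = π_A(j,y). Then the multiplicity of y/x as a root of d^{A(1)}_{i,j}(z) is at most the multiplicity of y'/x' as a root of d^{A(2)}_{i',j'}(z); in particular, if d^{A(1)}_{i,j}(y/x) = 0 then d^{A(2)}_{i',j'}(y'/x') = 0. -/
/-!
Put `ε = 1` when `i` and `j` lie on the same side of `(N+1)/2` and `ε = (-1)^N` otherwise, so that
`y'/x' = ε (y/x)`. In every case `min(i,j,N+1-i,N+1-j) = min(i',j')`, so the factors of `d^{A(1)}`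
and `d^{A(2)}` are indexed by the same `s`. After rescaling by `ε`, the factor
`z - (-q)^{|i-j|+2s}` becomes, up to a unit, the first half of the `s`-th factor of
`d^{A(2)}_{i',j'}` on the same side (where `|i'-j'| = |i-j|`), and the second half on opposite
sides, because `-q^{N+1} (-q)^{2s-i'-j'} = (-1)^N (-q)^{|i-j|+2s}`
(`neg_pow_mul_eq`). Hence `d^{A(1)}_{i,j}(εz)` divides `d^{A(2)}_{i',j'}(z)`
(`exists_sign_dvd`), and root multiplicities compare (`rootMultiplicity_le_of_comp_dvd`).
-/


open Polynomial

noncomputable section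

variable {𝕜 : Type*} [Field 𝕜]

/-- The denominator `d^{A(1)}_{i,j}(z) = ∏_{s=1}^{min(i,j,N+1−i,N+1−j)} (z − (−q)^{|i−j|+2s})`
of the normalized R-matrix between the fundamental modules `V(ϖ_i)`, `V(ϖ_j)` of
`U_q'(A_N^{(1)})`. -/
def dA1 (q : 𝕜) (N i j : ℤ) : Polynomial 𝕜 :=
  ∏ s ∈ Finset.Icc (1 : ℤ) (min (min i j) (min (N + 1 - i) (N + 1 - j))),
    (X - C ((-q) ^ (|i - j| + 2 * s)))

/-- The denominator
`d^{A(2)}_{i,j}(z) = ∏_{s=1}^{min(i,j)} (z − (−q)^{|i−j|+2s})(z + q^{N+1}(−q)^{2s−i−j})`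
of the normalized R-matrix between the fundamental modules `V(ϖ_i)`, `V(ϖ_j)` of
`U_q'(A_N^{(2)})`. -/
def dA2 (q : 𝕜) (N i j : ℤ) : Polynomial 𝕜 :=
  ∏ s ∈ Finset.Icc (1 : ℤ) (min i j),
    (X - C ((-q) ^ (|i - j| + 2 * s))) * (X + C (q ^ (N + 1) * (-q) ^ (2 * s - i - j)))

theorem C_mul_X_sub_C {ε : 𝕜} (hε : ε * ε = 1) (c : 𝕜) :
    C ε * X - C c = C ε * (X - C (ε * c)) := by
  rw [mul_sub, ← C_mul, ← mul_assoc, hε, one_mul]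

theorem isUnit_C_of_mul_self {ε : 𝕜} (hε : ε * ε = 1) : IsUnit (C ε) :=
  isUnit_C.2 (.of_mul_eq_one ε hε)

/-- The substitution `z ↦ εz` carries a root `a` of `p` to the root `εa`, as `ε = ε⁻¹`. -/
theorem rootMultiplicity_le_of_comp_dvd {ε : 𝕜} (hε : ε * ε = 1) {p r : 𝕜[X]} (hr : r ≠ 0)
    (h : p.comp (C ε * X) ∣ r) (a : 𝕜) :
    rootMultiplicity a p ≤ rootMultiplicity (ε * a) r ∧ (p.eval a = 0 → r.eval (ε * a) = 0) := by
  constructor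
  · rw [le_rootMultiplicity_iff hr]
    obtain ⟨g, hg⟩ := pow_rootMultiplicity_dvd p a
    refine Dvd.dvd.trans ?_ h
    conv_rhs => rw [hg]
    rw [mul_comp, pow_comp, sub_comp, X_comp, C_comp, C_mul_X_sub_C hε, mul_pow]
    exact Dvd.intro_left _ rfl |>.mul_right _
  · intro hp
    refine eval_eq_zero_of_dvd_of_eval_eq_zero h ?_
    simp [eval_comp, ← mul_assoc, hε, hp]

theorem prod_comp_dvd {ε : 𝕜} (hε : ε * ε = 1) (S : Finset ℤ) (c : ℤ → 𝕜) (F : ℤ → 𝕜[X])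
    (h : ∀ s, X - C (ε * c s) ∣ F s) :
    (∏ s ∈ S, (X - C (c s))).comp (C ε * X) ∣ ∏ s ∈ S, F s := by
  rw [prod_comp]
  refine Finset.prod_dvd_prod_of_dvd _ _ fun s _ => ?_
  rw [sub_comp, X_comp, C_comp, C_mul_X_sub_C hε, (isUnit_C_of_mul_self hε).mul_left_dvd]
  exact h s

theorem dA2_ne_zero (q : 𝕜) (N i j : ℤ) : dA2 q N i j ≠ 0 :=
  (monic_prod_of_monic _ _ fun _ _ => (monic_X_sub_C _).mul (monic_X_add_C _)).ne_zero

theorem neg_one_zpow_mul_self (N : ℤ) : (-1 : 𝕜) ^ N * (-1) ^ N = 1 := by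
  rw [← mul_zpow]; simp

/-- The second family of roots of `d^{A(2)}` is `(-1)^N` times a power of `-q`. -/
theorem neg_pow_mul_eq {q : 𝕜} (hq : q ≠ 0) (N m : ℤ) :
    (-1 : 𝕜) ^ N * (-q) ^ (N + 1 + m) = -(q ^ (N + 1) * (-q) ^ m) := by
  have h1 : (-1 : 𝕜) ≠ 0 := by simp
  have h2 : (-q) ^ (N + 1) = (-1 : 𝕜) ^ N * (-1) * q ^ (N + 1) := by
    rw [← zpow_add_one₀ h1, ← mul_zpow, neg_one_mul]
  rw [zpow_add₀ (neg_ne_zero.2 hq), h2]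
  linear_combination (-(q ^ (N + 1) * (-q) ^ m)) * neg_one_zpow_mul_self (𝕜 := 𝕜) N

/-- The case where `i` and `j` lie on the same side of `(N+1)/2`. -/
theorem dA1_comp_dvd_of_abs_eq (q : 𝕜) {N i j i' j' : ℤ}
    (hmin : min (min i j) (min (N + 1 - i) (N + 1 - j)) = min i' j')
    (habs : |i - j| = |i' - j'|) :
    (dA1 q N i j).comp (C 1 * X) ∣ dA2 q N i' j' := by
  rw [dA1, dA2, hmin, habs]
  refine prod_comp_dvd (one_mul 1) _ _ _ fun s => ?_
  rw [one_mul]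
  exact dvd_mul_right _ _

/-- The case where `i` and `j` lie on opposite sides of `(N+1)/2`, so that exactly one of them is
reflected. -/
theorem dA1_comp_dvd_of_abs_eq_sub {q : 𝕜} (hq : q ≠ 0) {N i j i' j' : ℤ}
    (hmin : min (min i j) (min (N + 1 - i) (N + 1 - j)) = min i' j')
    (habs : |i - j| = N + 1 - i' - j') :
    (dA1 q N i j).comp (C ((-1) ^ N) * X) ∣ dA2 q N i' j' := by
  rw [dA1, dA2, hmin, habs]
  refine prod_comp_dvd (neg_one_zpow_mul_self N) _ _ _ fun s => ?_
  rw [show N + 1 - i' - j' + 2 * s = N + 1 + (2 * s - i' - j') by ring, neg_pow_mul_eq hq,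
    C_neg, sub_neg_eq_add]
  exact dvd_mul_left _ _

/-- In all four cases `π_A` rescales the spectral ratio by a sign `ε`, and `d^{A(1)}_{i,j}(εz)`
divides `d^{A(2)}_{i',j'}(z)`. -/
theorem exists_sign_dvd {q : 𝕜} (hq : q ≠ 0) (N i j : ℤ) (x y : 𝕜) :
    ∃ ε : 𝕜, ε * ε = 1 ∧ (piA N (j, y)).2 / (piA N (i, x)).2 = ε * (y / x) ∧
      (dA1 q N i j).comp (C ε * X) ∣ dA2 q N (piA N (i, x)).1 (piA N (j, y)).1 := by
  have hs := neg_one_zpow_mul_self (𝕜 := 𝕜) N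
  have hs0 : (-1 : 𝕜) ^ N ≠ 0 := left_ne_zero_of_mul_eq_one hs
  by_cases hi : i ≤ (N + 1) / 2 <;> by_cases hj : j ≤ (N + 1) / 2 <;>
    simp only [piA, hi, hj, if_true, if_false]
  · exact ⟨1, one_mul 1, (one_mul _).symm, dA1_comp_dvd_of_abs_eq q (by omega) rfl⟩
  · refine ⟨_, hs, mul_div_assoc _ _ _, dA1_comp_dvd_of_abs_eq_sub hq (by omega) ?_⟩
    rw [abs_of_nonpos (by omega)]; ring
  · refine ⟨_, hs, ?_, dA1_comp_dvd_of_abs_eq_sub hq (by omega) ?_⟩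
    · rw [div_mul_eq_div_div_swap, div_eq_iff hs0, mul_right_comm, hs, one_mul]
    · rw [abs_of_nonneg (by omega)]; ring
  · refine ⟨1, one_mul 1, ?_, dA1_comp_dvd_of_abs_eq q (by omega) ?_⟩
    · rw [mul_div_mul_left _ _ hs0, one_mul]
    · rw [abs_sub_comm i j]; congr 1; ring

/-- Proposition (prop: quiver iso)(i), type A, arrow part: for `(i,x), (j,y)` with
`(i',x') = π_A(i,x)` and `(j',y') = π_A(j,y)`, the multiplicity of `y/x` as a root of
`d^{A(1)}_{i,j}` is at most the multiplicity of `y'/x'` as a root of `d^{A(2)}_{i',j'}`;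
in particular `d^{A(1)}_{i,j}(y/x) = 0` implies `d^{A(2)}_{i',j'}(y'/x') = 0`. -/
theorem statement2 (𝕜 : Type*) [Field 𝕜] [CharZero 𝕜] (q : 𝕜) (hq : Transcendental ℚ q)
    (N : ℤ) (hN : 2 ≤ N) (i j : ℤ) (x y : 𝕜)
    (hi : 1 ≤ i ∧ i ≤ N) (hj : 1 ≤ j ∧ j ≤ N) (hx : x ≠ 0) (hy : y ≠ 0) :
    Polynomial.rootMultiplicity (y / x) (dA1 q N i j) ≤
      Polynomial.rootMultiplicity ((piA N (j, y)).2 / (piA N (i, x)).2)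
        (dA2 q N (piA N (i, x)).1 (piA N (j, y)).1) ∧
    ((dA1 q N i j).eval (y / x) = 0 →
      (dA2 q N (piA N (i, x)).1 (piA N (j, y)).1).eval
        ((piA N (j, y)).2 / (piA N (i, x)).2) = 0) := by
  have hq0 : q ≠ 0 := by
    rintro rfl
    exact hq isAlgebraic_zero
  obtain ⟨ε, hε, hyx, hdvd⟩ := exists_sign_dvd hq0 N i j x y
  rw [hyx]
  exact rootMultiplicity_le_of_comp_dvd hε (dA2_ne_zero _ _ _ _) hdvd _
end
end

section
/- Let N ≥ 4 and let (k,x), (l,y) ∈ {1,…,N} × 𝕜^×; write (k',x') = π_D(k,x) and (l',y') = π_D(l,y). Then the multiplicity of y/x as a root of d^{D(1)}_{k,l}(z) is at most the multiplicity of y'/x' as a root of d^{D(2)}_{k',l'}(z); in particular, if d^{D(1)}_{k,l}(y/x) = 0 then d^{D(2)}_{k',l'}(y'/x') = 0. -/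
/-!
On the two nodes `(k, x)`, `(l, y)` the map `π_D` rescales the ratio `z = y / x` to `c * z`, where
`c ≠ 0` depends only on `k` and `l`. It therefore suffices to show that `d^{D(1)}_{k,l}(z)` divides
`d^{D(2)}_{k',l'}(c z)`, since an invertible linear substitution preserves multiplicities of roots
(`rootMultiplicity_le_of_dvd_comp`). The divisibility holds factor by factor. For `k, l` not both
spin nodes (`N - 1` or `N`), `c ^ 2` is a power of `-1`, and `((-q) ^ p) ^ 2 = (-1) ^ p * (-q ^ 2) ^ p`; in each
case the parity of the exponent `p` is exactly what makes `c * (-q) ^ p` a root of the matching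
quadratic factor. For two spin nodes, `c = ±1`, and the factors of `d^{D(1)}` match the factors
of `d^{D(2)}` of even index (`k ≠ l`) or of odd index (`k = l`).
-/

open Polynomial

noncomputable section

variable {𝕜 : Type*} [Field 𝕜]

/-- The denominator `d^{D(1)}_{k,l}(z)` of the normalized R-matrix between the fundamental
modules `V(ϖ_k)`, `V(ϖ_l)` of `U_q'(D_N^{(1)})` (four cases according to the positions of
`k`, `l` relative to the fork nodes `N−1`, `N`). -/
def dD1 (q : 𝕜) (N k l : ℤ) : Polynomial 𝕜 :=
  if k ≤ N - 2 ∧ l ≤ N - 2 then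
    ∏ s ∈ Finset.Icc (1 : ℤ) (min k l),
      (X - C ((-q) ^ (|k - l| + 2 * s))) * (X - C ((-q) ^ (2 * N - 2 - k - l + 2 * s)))
  else if k ≤ N - 2 ∨ l ≤ N - 2 then
    ∏ s ∈ Finset.Icc (1 : ℤ) (min k l), (X - C ((-q) ^ (N - min k l - 1 + 2 * s)))
  else if k ≠ l then
    ∏ s ∈ Finset.Icc (1 : ℤ) ((N - 1) / 2), (X - C ((-q) ^ (4 * s)))
  else
    ∏ s ∈ Finset.Icc (1 : ℤ) (N / 2), (X - C ((-q) ^ (4 * s - 2)))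

/-- The denominator `d^{D(2)}_{k,l}(z)` of the normalized R-matrix between the fundamental
modules `V(ϖ_k)`, `V(ϖ_l)` of `U_q'(D_N^{(2)})` (three cases, for `1 ≤ k, l ≤ N−1`). -/
def dD2 (q : 𝕜) (N k l : ℤ) : Polynomial 𝕜 :=
  if k ≤ N - 2 ∧ l ≤ N - 2 then
    ∏ s ∈ Finset.Icc (1 : ℤ) (min k l),
      (X ^ 2 - C ((-q ^ 2) ^ (|k - l| + 2 * s))) *
        (X ^ 2 - C ((-q ^ 2) ^ (2 * N - 2 - k - l + 2 * s)))
  else if k ≤ N - 2 ∨ l ≤ N - 2 then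
    ∏ s ∈ Finset.Icc (1 : ℤ) (min k l), (X ^ 2 + C ((-q ^ 2) ^ (N - 1 - min k l + 2 * s)))
  else
    ∏ s ∈ Finset.Icc (1 : ℤ) (N - 1), (X + C ((-q ^ 2) ^ s))

theorem rootMultiplicity_le_of_dvd_comp {P Q : Polynomial 𝕜} {c : 𝕜} (hc : c ≠ 0) (hQ : Q ≠ 0)
    (h : P ∣ Q.comp (C c * X)) (a : 𝕜) :
    rootMultiplicity a P ≤ rootMultiplicity (c * a) Q := by
  rw [le_rootMultiplicity_iff hQ]
  have h1 : (X - C a) ^ rootMultiplicity a P ∣ Q.comp (C c * X) :=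
    (pow_rootMultiplicity_dvd P a).trans h
  -- Undo the substitution `X ↦ c X` to bring the divisibility back to `Q` itself.
  have h2 := _root_.map_dvd (compRingHom (C c⁻¹ * X)) h1
  simp only [coe_compRingHom, pow_comp, sub_comp, X_comp, C_comp, comp_assoc, mul_comp] at h2
  rw [← mul_assoc, ← C_mul, mul_inv_cancel₀ hc, C_1, one_mul, comp_X] at h2
  refine (pow_dvd_pow_of_dvd ?_ _).trans h2
  refine ⟨C c⁻¹, ?_⟩
  rw [sub_mul, ← C_mul, mul_comm X, mul_right_comm, mul_inv_cancel₀ hc, one_mul]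

theorem neg_zpow_sq (q : 𝕜) (p : ℤ) : ((-q) ^ p) ^ 2 = (-1) ^ p * (-q ^ 2) ^ p := by
  rw [← mul_zpow, ← zpow_natCast, zpow_comm, zpow_natCast]
  congr 1
  ring

theorem neg_zpow_sq_mul {q c : 𝕜} {e p : ℤ} (hc : c ^ 2 = (-1) ^ e) :
    (c * (-q) ^ p) ^ 2 = (-1) ^ (e + p) * (-q ^ 2) ^ p := by
  rw [mul_pow, hc, neg_zpow_sq, zpow_add₀ (by simp), mul_assoc]

theorem X_sub_C_dvd_comp_sub {q c : 𝕜} {e p : ℤ} (hc : c ^ 2 = (-1) ^ e) (h : Even (e + p)) :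
    X - C ((-q) ^ p) ∣ (X ^ 2 - C ((-q ^ 2) ^ p)).comp (C c * X) := by
  rw [dvd_iff_isRoot, IsRoot.def]
  simp [neg_zpow_sq_mul hc, h.neg_one_zpow]

theorem X_sub_C_dvd_comp_add {q c : 𝕜} {e p : ℤ} (hc : c ^ 2 = (-1) ^ e) (h : Odd (e + p)) :
    X - C ((-q) ^ p) ∣ (X ^ 2 + C ((-q ^ 2) ^ p)).comp (C c * X) := by
  rw [dvd_iff_isRoot, IsRoot.def]
  simp [neg_zpow_sq_mul hc, h.neg_one_zpow]

theorem dD2_ne_zero (q : 𝕜) (N k l : ℤ) : dD2 q N k l ≠ 0 := by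
  unfold dD2
  split_ifs
  · exact (monic_prod_of_monic _ _ fun s _ => (monic_X_pow_sub_C _ two_ne_zero).mul
      (monic_X_pow_sub_C _ two_ne_zero)).ne_zero
  · exact (monic_prod_of_monic _ _ fun s _ => monic_X_pow_add_C _ two_ne_zero).ne_zero
  · exact (monic_prod_of_monic _ _ fun s _ => monic_X_add_C _).ne_zero

theorem dD1_dvd_of_le {q c : 𝕜} {N k l : ℤ} (hk : k ≤ N - 2) (hl : l ≤ N - 2)
    (hc : c ^ 2 = (-1) ^ (k - l)) : dD1 q N k l ∣ (dD2 q N k l).comp (C c * X) := by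
  rw [dD1, dD2, if_pos ⟨hk, hl⟩, if_pos ⟨hk, hl⟩, prod_comp]
  refine Finset.prod_dvd_prod_of_dvd _ _ fun s _ => ?_
  rw [mul_comp]
  refine mul_dvd_mul (X_sub_C_dvd_comp_sub hc ?_) (X_sub_C_dvd_comp_sub hc ?_)
  · rw [Int.even_iff]
    rcases abs_cases (k - l) with h | h <;> omega
  · rw [Int.even_iff]
    omega

/-- Exactly one spin node. The indices on the `D(2)` side are free as long as they have the same
minimum, because `π_D` collapses both spin nodes to `N - 1`. -/
theorem dD1_dvd_of_mixed {q c : 𝕜} {N k l k' l' : ℤ} (h : ¬(k ≤ N - 2 ∧ l ≤ N - 2))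
    (h' : k ≤ N - 2 ∨ l ≤ N - 2) (g : ¬(k' ≤ N - 2 ∧ l' ≤ N - 2))
    (g' : k' ≤ N - 2 ∨ l' ≤ N - 2) (hm : min k' l' = min k l)
    (hc : c ^ 2 = (-1) ^ (N - min k l)) :
    dD1 q N k l ∣ (dD2 q N k' l').comp (C c * X) := by
  rw [dD1, dD2, if_neg h, if_pos h', if_neg g, if_pos g', hm, prod_comp]
  refine Finset.prod_dvd_prod_of_dvd _ _ fun s _ => ?_
  rw [sub_right_comm N 1]
  refine X_sub_C_dvd_comp_add hc ?_
  rw [Int.odd_iff]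
  omega

/-- For two spin nodes: the factor of index `s` of `d^{D(1)}` divides the factor of index
`f s` of `d^{D(2)}`, for an injective reindexing `f`. -/
theorem prod_dvd_comp_of_reindex {q c : 𝕜} {n M : ℤ} (f : ℤ → ℤ) (e : ℤ → ℤ)
    (hf : Function.Injective f)
    (hmem : ∀ s ∈ Finset.Icc (1 : ℤ) n, f s ∈ Finset.Icc (1 : ℤ) M)
    (hroot : ∀ s, c * (-q) ^ e s + (-q ^ 2) ^ f s = 0) :
    ∏ s ∈ Finset.Icc (1 : ℤ) n, (X - C ((-q) ^ e s)) ∣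
      (∏ s ∈ Finset.Icc (1 : ℤ) M, (X + C ((-q ^ 2) ^ s))).comp (C c * X) := by
  rw [prod_comp]
  refine Dvd.dvd.trans ?_
    (Finset.prod_dvd_prod_of_subset _ _ _ (Finset.image_subset_iff.2 hmem))
  rw [Finset.prod_image hf.injOn]
  refine Finset.prod_dvd_prod_of_dvd _ _ fun s _ => ?_
  rw [dvd_iff_isRoot, IsRoot.def]
  simpa [eval_comp] using hroot s

theorem neg_zpow_two_mul (q : 𝕜) (p : ℤ) : (-q) ^ (2 * p) = (-1) ^ p * (-q ^ 2) ^ p := by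
  rw [← neg_zpow_sq, mul_comm, zpow_mul]
  exact zpow_natCast _ 2

theorem dD1_dvd_of_spin {q c : 𝕜} {N k l : ℤ} (hk : N - 2 < k ∧ k ≤ N) (hl : N - 2 < l ∧ l ≤ N)
    (hc : c = (-1) ^ (l - k)) :
    dD1 q N k l ∣ (dD2 q N (N - 1) (N - 1)).comp (C c * X) := by
  have h1 : ¬(k ≤ N - 2 ∧ l ≤ N - 2) := by omega
  have h2 : ¬(k ≤ N - 2 ∨ l ≤ N - 2) := by omega
  have h3 : ¬(N - 1 ≤ N - 2 ∧ N - 1 ≤ N - 2) := by omega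
  have h4 : ¬(N - 1 ≤ N - 2 ∨ N - 1 ≤ N - 2) := by omega
  rw [dD1, dD2, if_neg h1, if_neg h2, if_neg h3, if_neg h4]
  by_cases hkl : k ≠ l
  · rw [if_pos hkl]
    have hodd : Odd (l - k) := by
      rw [Int.odd_iff]
      omega
    refine prod_dvd_comp_of_reindex (fun s => 2 * s) (fun s => 4 * s)
      (fun a b h => by dsimp only at h; omega)
      (fun s hs => by rw [Finset.mem_Icc] at *; omega) fun s => ?_
    rw [hc, hodd.neg_one_zpow, show 4 * s = 2 * (2 * s) by ring, neg_zpow_two_mul,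
      (even_two_mul s).neg_one_zpow]
    ring
  · rw [if_neg hkl]
    have hev : l - k = 0 := by omega
    refine prod_dvd_comp_of_reindex (fun s => 2 * s - 1) (fun s => 4 * s - 2)
      (fun a b h => by dsimp only at h; omega)
      (fun s hs => by rw [Finset.mem_Icc] at *; omega) fun s => ?_
    have hodd : Odd (2 * s - 1) := by
      rw [Int.odd_iff]
      omega
    rw [hc, hev, show 4 * s - 2 = 2 * (2 * s - 1) by ring, neg_zpow_two_mul, hodd.neg_one_zpow]
    ring

/-- Proposition (prop: quiver iso)(i), type D, arrow part: for `(k,x), (l,y)` with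
`(k',x') = π_D(k,x)` and `(l',y') = π_D(l,y)`, the multiplicity of `y/x` as a root of
`d^{D(1)}_{k,l}` is at most the multiplicity of `y'/x'` as a root of `d^{D(2)}_{k',l'}`;
in particular `d^{D(1)}_{k,l}(y/x) = 0` implies `d^{D(2)}_{k',l'}(y'/x') = 0`. -/
theorem statement3 (𝕜 : Type*) [Field 𝕜] [CharZero 𝕜] (q ι : 𝕜)
    (hq : Transcendental ℚ q) (hι : ι ^ 2 = -1)
    (N : ℤ) (hN : 4 ≤ N) (k l : ℤ) (x y : 𝕜)
    (hk : 1 ≤ k ∧ k ≤ N) (hl : 1 ≤ l ∧ l ≤ N) (hx : x ≠ 0) (hy : y ≠ 0) :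
    Polynomial.rootMultiplicity (y / x) (dD1 q N k l) ≤
      Polynomial.rootMultiplicity ((piD ι N (l, y)).2 / (piD ι N (k, x)).2)
        (dD2 q N (piD ι N (k, x)).1 (piD ι N (l, y)).1) ∧
    ((dD1 q N k l).eval (y / x) = 0 →
      (dD2 q N (piD ι N (k, x)).1 (piD ι N (l, y)).1).eval
        ((piD ι N (l, y)).2 / (piD ι N (k, x)).2) = 0) := by
  have hι0 : ι ≠ 0 := by
    rintro rfl
    simp at hι
  have hιsq (n : ℤ) : (ι ^ n) ^ 2 = (-1) ^ n := by
    rw [← hι, ← zpow_natCast, zpow_comm, zpow_natCast]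
  have hsgn (n : ℤ) : ((-1 : 𝕜) ^ n) ^ 2 = 1 := by
    rw [← zpow_natCast, zpow_comm, zpow_natCast, neg_one_sq, one_zpow]
  suffices H : ∃ c : 𝕜, c ≠ 0 ∧ (piD ι N (l, y)).2 / (piD ι N (k, x)).2 = c * (y / x) ∧
      dD1 q N k l ∣ (dD2 q N (piD ι N (k, x)).1 (piD ι N (l, y)).1).comp (C c * X) by
    obtain ⟨c, hc, hz, hd⟩ := H
    rw [hz]
    refine ⟨rootMultiplicity_le_of_dvd_comp hc (dD2_ne_zero _ _ _ _) hd _, fun h0 => ?_⟩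
    simpa [eval_comp] using eval_eq_zero_of_dvd_of_eval_eq_zero hd h0
  by_cases hk' : k ≤ N - 2 <;> by_cases hl' : l ≤ N - 2
  · refine ⟨ι ^ (N - l) / ι ^ (N - k), by simp [zpow_ne_zero, hι0], ?_, ?_⟩
    · simp only [piD, hk', hl', if_true]
      exact mul_div_mul_comm _ _ _ _
    · simp only [piD, hk', hl', if_true]
      refine dD1_dvd_of_le hk' hl' ?_
      rw [← zpow_sub₀ hι0, hιsq, sub_sub_sub_cancel_left]
  · refine ⟨(-1) ^ l / ι ^ (N - k), by simp [zpow_ne_zero, hι0], ?_, ?_⟩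
    · simp only [piD, hk', hl', if_true, if_false]
      exact mul_div_mul_comm _ _ _ _
    · simp only [piD, hk', hl', if_true, if_false]
      refine dD1_dvd_of_mixed (by omega) (by omega) (by omega) (by omega) (by omega) ?_
      rw [min_eq_left (by omega), div_pow, hsgn, hιsq, one_div, ← inv_zpow, inv_neg_one]
  · refine ⟨ι ^ (N - l) / (-1) ^ k, by simp [zpow_ne_zero, hι0], ?_, ?_⟩
    · simp only [piD, hk', hl', if_true, if_false]
      exact mul_div_mul_comm _ _ _ _
    · simp only [piD, hk', hl', if_true, if_false]
      refine dD1_dvd_of_mixed (by omega) (by omega) (by omega) (by omega) (by omega) ?_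
      rw [min_eq_right (by omega), div_pow, hsgn, hιsq, div_one]
  · refine ⟨(-1) ^ l / (-1) ^ k, by simp [zpow_ne_zero, hι0], ?_, ?_⟩
    · simp only [piD, hk', hl', if_false]
      exact mul_div_mul_comm _ _ _ _
    · simp only [piD, hk', hl', if_false]
      exact dD1_dvd_of_spin (by omega) (by omega) (zpow_sub₀ (by simp) _ _).symm
end
end

section
/- Let N ≥ 2. Then (a) every element of S₀¹ is mapped by π_A into S₀², and the induced map from S₀¹ to the set of ∼-equivalence classes of elements of S₀² is a bijection; (b) for all (i,x), (j,y) ∈ S₀¹, writing (i',x') = π_A(i,x) and (j',y') = π_A(j,y), the multiplicity of y/x as a root of d^{A(1)}_{i,j}(z) equals the multiplicity of y'/x' as a root of d^{A(2)}_{i',j'}(z). -/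
/-!
Put `a = -q` and `σ = (-1)^N`. Since `q` is transcendental, `a` is not a root of unity, so
`m ↦ a ^ m` is injective and `a ^ m ≠ -a ^ n` for all `m`, `n` (`zpow_inj_of_transcendental`,
`zpow_ne_neg_zpow`). Consequently `a ^ m = σ * a ^ n` holds only when `N` is even and `m = n`
(`zpow_eq_sign_mul_iff`).

The roots of `dA1` are the `a ^ (|i - j| + 2s)`, while `dA2` has these together with the roots
`σ * a ^ (N + 1 + 2s - i - j)`; a multiplicity is the number of indices `s` giving the prescribed
root. If `i` and `j` lie on the same side of `(N+1)/2`, then `π_A` preserves `y / x` and `|i - j|`,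
so the first family of `dA2` reproduces `dA1`. If they lie on different sides, `y / x` is multiplied
by `σ` and the second family reproduces `dA1`. The remaining family never contributes: for odd `N`
the sign is wrong, and for even `N` the exponent has the wrong parity. The same dichotomy, sign for
`N` odd and parity for `N` even, separates the two halves of `S01A` under `π_A`, which gives the
bijection onto the `∼`-classes.
-/

open Polynomial

noncomputable section

variable {𝕜 : Type*} [Field 𝕜]

/-- The connected component `S₀(A_N^{(1)}) = {(i,(−q)^p) : 1 ≤ i ≤ N, p ≡ i−1 (mod 2)}`. -/
def S01A (q : 𝕜) (N : ℤ) : Set (ℤ × 𝕜) :=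
  {v | ∃ i p : ℤ, 1 ≤ i ∧ i ≤ N ∧ p % 2 = (i - 1) % 2 ∧ v = (i, (-q) ^ p)}

/-- The connected component `S₀(A_N^{(2)})`: for even `N` it is
`{(i,(−q)^p) : 1 ≤ i ≤ N/2, p ∈ ℤ}`, and for odd `N` it is
`{(i, ±(−q)^p) : 1 ≤ i ≤ (N+1)/2, p ≡ i+1 (mod 2)}`. -/
def S02A (q : 𝕜) (N : ℤ) : Set (ℤ × 𝕜) :=
  if Even N then {v | ∃ i p : ℤ, 1 ≤ i ∧ i ≤ N / 2 ∧ v = (i, (-q) ^ p)}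
  else {v | ∃ (i p : ℤ) (ε : 𝕜), (ε = 1 ∨ ε = -1) ∧ 1 ≤ i ∧ i ≤ (N + 1) / 2 ∧
        p % 2 = (i + 1) % 2 ∧ v = (i, ε * (-q) ^ p)}

/-! ### Signed powers of a transcendental element -/

theorem ne_zero_of_transcendental [CharZero 𝕜] {q : 𝕜} (hq : Transcendental ℚ q) : q ≠ 0 := by
  rintro rfl
  exact hq isAlgebraic_zero

theorem zpow_inj_of_transcendental [CharZero 𝕜] {q : 𝕜} (hq : Transcendental ℚ q) {m n : ℤ} :
    (-q) ^ m = (-q) ^ n ↔ m = n := by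
  refine ⟨fun h => ?_, fun h => by rw [h]⟩
  have h0 : -q ≠ 0 := neg_ne_zero.mpr (ne_zero_of_transcendental hq)
  have ht : Transcendental ℚ (-q) := fun h => hq (by simpa using h.neg)
  have key : Function.Injective (fun k : ℤ => (Units.mk0 (-q) h0) ^ k) := by
    rw [injective_zpow_iff_not_isOfFinOrder, isOfFinOrder_iff_pow_eq_one]
    rintro ⟨k, hk, h1⟩
    have h2 : (-q) ^ k = 1 := by simpa using congrArg Units.val h1
    exact ht.pow hk (h2 ▸ isAlgebraic_one)
  exact key (Units.ext (by simpa using h))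

theorem zpow_ne_neg_zpow [CharZero 𝕜] {q : 𝕜} (hq : Transcendental ℚ q) (m n : ℤ) :
    (-q) ^ m ≠ -(-q) ^ n := by
  intro h
  have h0 : -q ≠ 0 := neg_ne_zero.mpr (ne_zero_of_transcendental hq)
  -- Squaring removes the sign, so the exponents agree and `2 * a ^ n = 0`.
  have h2 : (-q) ^ (m + m) = (-q) ^ (n + n) := by
    rw [zpow_add₀ h0, zpow_add₀ h0, h, neg_mul_neg]
  have h3 : m = n := by
    have := (zpow_inj_of_transcendental hq).1 h2
    omega
  subst h3
  exact zpow_ne_zero m h0 (self_eq_neg.mp h)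

theorem negOne_zpow_mul_self (N : ℤ) : (-1 : 𝕜) ^ N * (-1 : 𝕜) ^ N = 1 := by
  rw [← mul_zpow]; simp

theorem negOne_zpow_ne_zero (N : ℤ) : (-1 : 𝕜) ^ N ≠ 0 := zpow_ne_zero _ (by simp)

theorem zpow_eq_sign_mul_iff [CharZero 𝕜] {q : 𝕜} (hq : Transcendental ℚ q) (N m n : ℤ) :
    (-q) ^ m = (-1 : 𝕜) ^ N * (-q) ^ n ↔ Even N ∧ m = n := by
  rcases Int.even_or_odd N with h | h
  · simp [h, h.neg_one_zpow, zpow_inj_of_transcendental hq]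
  · have h' : ¬ Even N := Int.not_even_iff_odd.2 h
    simp [h', h.neg_one_zpow, zpow_ne_neg_zpow hq]

/-! ### Root multiplicities of the denominators -/

open Classical in
/-- The multiplicity of a root of a product of linear factors counts the factors it annihilates. -/
theorem rootMultiplicity_prod_linear (S : Finset ℤ) (f : ℤ → 𝕜) (z : 𝕜) :
    rootMultiplicity z (∏ s ∈ S, (X - C (f s))) = (S.filter fun s => f s = z).card := by
  rw [← count_roots]
  have h : (∏ s ∈ S, (X - C (f s))) = ((S.val.map f).map fun b => X - C b).prod := by
    rw [Multiset.map_map]; rfl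
  rw [h, roots_multiset_prod_X_sub_C, Multiset.count_map]
  simp only [Finset.card, Finset.filter_val, eq_comm]

open Classical in
theorem rootMultiplicity_dA1 (q : 𝕜) (N i j : ℤ) (z : 𝕜) :
    rootMultiplicity z (dA1 q N i j) =
      ((Finset.Icc (1 : ℤ) (min (min i j) (min (N + 1 - i) (N + 1 - j)))).filter
        fun s => (-q) ^ (|i - j| + 2 * s) = z).card :=
  rootMultiplicity_prod_linear _ _ z

open Classical in
/-- The multiplicity of a root of `dA2` as a sum over the two families of linear factors; the
roots of the second family are rewritten as signed powers of `-q`. -/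
theorem rootMultiplicity_dA2 {q : 𝕜} (h0 : q ≠ 0) (N i j : ℤ) (z : 𝕜) :
    rootMultiplicity z (dA2 q N i j) =
      ((Finset.Icc (1 : ℤ) (min i j)).filter fun s => (-q) ^ (|i - j| + 2 * s) = z).card +
      ((Finset.Icc (1 : ℤ) (min i j)).filter
        fun s => (-1 : 𝕜) ^ N * (-q) ^ (N + 1 + 2 * s - i - j) = z).card := by
  have h1 : -q ≠ 0 := neg_ne_zero.mpr h0
  have e (s : ℤ) : q ^ (N + 1) * (-q) ^ (2 * s - i - j) =
      -((-1 : 𝕜) ^ N * (-q) ^ (N + 1 + 2 * s - i - j)) := by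
    have hs : N + 1 + 2 * s - i - j = (N + 1) + (2 * s - i - j) := by ring
    have hp : (-q) ^ (N + 1) = (-1 : 𝕜) ^ (N + 1) * q ^ (N + 1) := by
      rw [← mul_zpow, neg_one_mul]
    have hN : (-1 : 𝕜) ^ (N + 1) = -(-1 : 𝕜) ^ N := by
      rw [zpow_add₀ (by simp)]; simp
    rw [hs, zpow_add₀ h1, hp, hN]
    linear_combination (-(q ^ (N + 1) * (-q) ^ (2 * s - i - j))) * negOne_zpow_mul_self (𝕜 := 𝕜) N
  have hd : dA2 q N i j =
      (∏ s ∈ Finset.Icc (1 : ℤ) (min i j), (X - C ((-q) ^ (|i - j| + 2 * s)))) *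
      (∏ s ∈ Finset.Icc (1 : ℤ) (min i j),
        (X - C ((-1 : 𝕜) ^ N * (-q) ^ (N + 1 + 2 * s - i - j)))) := by
    rw [dA2, ← Finset.prod_mul_distrib]
    refine Finset.prod_congr rfl fun s _ => ?_
    rw [e, C_neg, ← sub_eq_add_neg]
  rw [hd, rootMultiplicity_mul, rootMultiplicity_prod_linear, rootMultiplicity_prod_linear]
  exact mul_ne_zero (Finset.prod_ne_zero_iff.2 fun s _ => X_sub_C_ne_zero _)
    (Finset.prod_ne_zero_iff.2 fun s _ => X_sub_C_ne_zero _)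

/-- For labels `i`, `j` in the lower half the second family of factors of `dA2` does not vanish at
`a ^ d`: for odd `N` its roots carry the wrong sign, for even `N` their exponents have the wrong
parity. The first family is the product `dA1`. -/
theorem rootMultiplicity_dA2_zpow [CharZero 𝕜] {q : 𝕜} (hq : Transcendental ℚ q)
    (N i j d : ℤ) (hi : i ≤ (N + 1) / 2) (hj : j ≤ (N + 1) / 2)
    (hd : Even N → d % 2 = (i + j) % 2) :
    rootMultiplicity ((-q) ^ d) (dA2 q N i j) = rootMultiplicity ((-q) ^ d) (dA1 q N i j) := by
  classical
  have hm : min (min i j) (min (N + 1 - i) (N + 1 - j)) = min i j := by omega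
  rw [rootMultiplicity_dA1, rootMultiplicity_dA2 (ne_zero_of_transcendental hq), hm, Nat.add_eq_left,
    Finset.card_eq_zero, Finset.filter_eq_empty_iff]
  intro s _ h
  obtain ⟨he, h⟩ := (zpow_eq_sign_mul_iff hq N _ _).1 h.symm
  have := hd he
  rw [Int.even_iff] at he
  omega

/-- For labels `i ≤ (N+1)/2 < j` (with `j' = N + 1 - j`), only the second family of factors of
`dA2` can vanish at `σ * a ^ d`, and its exponents `2s + j - i` are those of `dA1`. -/
theorem rootMultiplicity_dA2_sign_zpow [CharZero 𝕜] {q : 𝕜} (hq : Transcendental ℚ q)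
    (N i j d : ℤ) (hi : i ≤ (N + 1) / 2) (hj : (N + 1) / 2 < j)
    (hd : d % 2 = (i + j) % 2) :
    rootMultiplicity ((-1 : 𝕜) ^ N * (-q) ^ d) (dA2 q N i (N + 1 - j)) =
      rootMultiplicity ((-q) ^ d) (dA1 q N i j) := by
  classical
  have hm : min (min i j) (min (N + 1 - i) (N + 1 - j)) = min i (N + 1 - j) := by omega
  have h1 : ((Finset.Icc (1 : ℤ) (min i (N + 1 - j))).filter fun s =>
      (-q) ^ (|i - (N + 1 - j)| + 2 * s) = (-1 : 𝕜) ^ N * (-q) ^ d).card = 0 := by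
    rw [Finset.card_eq_zero, Finset.filter_eq_empty_iff]
    intro s _ h
    obtain ⟨he, h⟩ := (zpow_eq_sign_mul_iff hq N _ _).1 h
    rw [Int.even_iff] at he
    rcases abs_cases (i - (N + 1 - j)) with ⟨ha, -⟩ | ⟨ha, -⟩ <;> omega
  rw [rootMultiplicity_dA1, rootMultiplicity_dA2 (ne_zero_of_transcendental hq), hm, h1, zero_add]
  congr 1
  refine Finset.filter_congr fun s _ => ?_
  rw [mul_right_inj' (negOne_zpow_ne_zero N), abs_of_nonpos (by omega)]
  have : N + 1 + 2 * s - i - (N + 1 - j) = -(i - j) + 2 * s := by ring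
  rw [this]

theorem dA1_symm (q : 𝕜) (N i j : ℤ) : dA1 q N i j = dA1 q N j i := by
  simp only [dA1, abs_sub_comm i j, min_comm i j, min_comm (N + 1 - i)]

theorem dA2_symm (q : 𝕜) (N i j : ℤ) : dA2 q N i j = dA2 q N j i := by
  simp only [dA2, abs_sub_comm i j, min_comm i j, sub_right_comm _ i j]

/-- `dA1` is invariant under the diagram automorphism `i ↦ N + 1 - i`. -/
theorem dA1_flip (q : 𝕜) (N i j : ℤ) : dA1 q N (N + 1 - i) (N + 1 - j) = dA1 q N i j := by
  have h1 : |N + 1 - i - (N + 1 - j)| = |i - j| := by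
    rw [abs_sub_comm i j]; congr 1; ring
  have h2 : min (min (N + 1 - i) (N + 1 - j)) (min (N + 1 - (N + 1 - i)) (N + 1 - (N + 1 - j)))
      = min (min i j) (min (N + 1 - i) (N + 1 - j)) := by omega
  rw [dA1, dA1, h1, h2]

/-! ### The map `π_A` on the connected components -/

theorem piA_mem {q : 𝕜} (N : ℤ) (v : ℤ × 𝕜) (hv : v ∈ S01A q N) :
    piA N v ∈ S02A q N := by
  obtain ⟨i, p, h1, h2, h3, rfl⟩ := hv
  rcases Int.even_or_odd N with h | h
  · rw [S02A, if_pos h]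
    rw [Int.even_iff] at h
    by_cases hi : i ≤ (N + 1) / 2
    · exact ⟨i, p, h1, by omega, by simp [piA, hi]⟩
    · exact ⟨N + 1 - i, p, by omega, by omega, by
        simp [piA, hi, (Int.even_iff.2 h).neg_one_zpow]⟩
  · rw [S02A, if_neg (Int.not_even_iff_odd.2 h)]
    rw [Int.odd_iff] at h
    by_cases hi : i ≤ (N + 1) / 2
    · exact ⟨i, p, 1, .inl rfl, h1, hi, by omega, by simp [piA, hi]⟩
    · exact ⟨N + 1 - i, p, -1, .inr rfl, by omega, by omega, by omega, by
        simp [piA, hi, (Int.odd_iff.2 h).neg_one_zpow]⟩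

theorem piA_inj [CharZero 𝕜] {q : 𝕜} (hq : Transcendental ℚ q) (N : ℤ) (v w : ℤ × 𝕜)
    (hv : v ∈ S01A q N) (hw : w ∈ S01A q N) (h : simA N (piA N v) (piA N w)) : v = w := by
  obtain ⟨i, p, -, hi2, hi3, rfl⟩ := hv
  obtain ⟨j, r, -, hj2, hj3, rfl⟩ := hw
  obtain ⟨h1, h2⟩ := h
  by_cases hi : i ≤ (N + 1) / 2 <;> by_cases hj : j ≤ (N + 1) / 2 <;>
    simp only [piA, hi, hj, if_true, if_false] at h1 h2
  · rcases h2 with h2 | ⟨-, -, h2⟩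
    · rw [h1, h2]
    · exact absurd h2 (zpow_ne_neg_zpow hq _ _)
  · rcases h2 with h2 | ⟨ho, h3, -⟩
    · obtain ⟨he, h2⟩ := (zpow_eq_sign_mul_iff hq N _ _).1 h2
      rw [Int.even_iff] at he
      omega
    · rw [Int.odd_iff] at ho
      omega
  · rcases h2 with h2 | ⟨ho, h3, -⟩
    · obtain ⟨he, h2⟩ := (zpow_eq_sign_mul_iff hq N _ _).1 h2.symm
      rw [Int.even_iff] at he
      omega
    · rw [Int.odd_iff] at ho
      omega
  · rcases h2 with h2 | ⟨ho, h3, -⟩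
    · rw [mul_right_inj' (negOne_zpow_ne_zero N)] at h2
      rw [h2, show i = j by omega]
    · rw [Int.odd_iff] at ho
      omega

theorem piA_surj {q : 𝕜} (N : ℤ) (w : ℤ × 𝕜) (hw : w ∈ S02A q N) :
    ∃ v ∈ S01A q N, simA N (piA N v) w := by
  rcases Int.even_or_odd N with h | h
  · rw [S02A, if_pos h] at hw
    obtain ⟨i, p, h1, h2, rfl⟩ := hw
    have hN := Int.even_iff.1 h
    -- For even `N` the parity of `p` tells which of `i`, `N + 1 - i` is the preimage.
    by_cases hp : p % 2 = (i - 1) % 2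
    · refine ⟨(i, (-q) ^ p), ⟨i, p, h1, by omega, hp, rfl⟩, ?_⟩
      simp [simA, piA, show i ≤ (N + 1) / 2 by omega]
    · refine ⟨(N + 1 - i, (-q) ^ p), ⟨N + 1 - i, p, by omega, by omega, by omega, rfl⟩, ?_⟩
      simp [simA, piA, show ¬ N + 1 - i ≤ (N + 1) / 2 by omega, h.neg_one_zpow]
  · rw [S02A, if_neg (Int.not_even_iff_odd.2 h)] at hw
    obtain ⟨i, p, ε, hε, h1, h2, h3, rfl⟩ := hw
    have hN := Int.odd_iff.1 h
    rcases hε with rfl | rfl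
    · refine ⟨(i, (-q) ^ p), ⟨i, p, h1, by omega, by omega, rfl⟩, ?_⟩
      simp [simA, piA, h2]
    -- The sign `-1` comes from the upper half, except at the middle node, where `∼` absorbs it.
    · by_cases hi : i = (N + 1) / 2
      · refine ⟨(i, (-q) ^ p), ⟨i, p, h1, by omega, by omega, rfl⟩, ?_⟩
        simp [simA, piA, h, ← hi]
      · refine ⟨(N + 1 - i, (-q) ^ p), ⟨N + 1 - i, p, by omega, by omega, by omega, rfl⟩, ?_⟩
        simp [simA, piA, show ¬ N + 1 - i ≤ (N + 1) / 2 by omega, h.neg_one_zpow]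

theorem rootMultiplicity_piA [CharZero 𝕜] {q : 𝕜} (hq : Transcendental ℚ q) (N : ℤ)
    (v w : ℤ × 𝕜) (hv : v ∈ S01A q N) (hw : w ∈ S01A q N) :
    rootMultiplicity (w.2 / v.2) (dA1 q N v.1 w.1) =
      rootMultiplicity ((piA N w).2 / (piA N v).2) (dA2 q N (piA N v).1 (piA N w).1) := by
  obtain ⟨i, p, -, hi2, hi3, rfl⟩ := hv
  obtain ⟨j, r, -, hj2, hj3, rfl⟩ := hw
  have h0 : -q ≠ 0 := neg_ne_zero.mpr (ne_zero_of_transcendental hq)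
  have hs := negOne_zpow_ne_zero (𝕜 := 𝕜) N
  have hinv : ((-1 : 𝕜) ^ N)⁻¹ = (-1 : 𝕜) ^ N :=
    inv_eq_of_mul_eq_one_left (negOne_zpow_mul_self N)
  by_cases hi : i ≤ (N + 1) / 2 <;> by_cases hj : j ≤ (N + 1) / 2 <;>
    simp only [piA, hi, hj, if_true, if_false]
  · rw [← zpow_sub₀ h0, rootMultiplicity_dA2_zpow hq N i j _ hi hj (by omega)]
  · rw [mul_div_assoc, ← zpow_sub₀ h0,
      rootMultiplicity_dA2_sign_zpow hq N i j _ hi (by omega) (by omega)]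
  · have e : (-q) ^ r / ((-1 : 𝕜) ^ N * (-q) ^ p) = (-1 : 𝕜) ^ N * (-q) ^ (r - p) := by
      rw [zpow_sub₀ h0, div_eq_mul_inv, mul_inv, hinv]; ring
    rw [e, ← zpow_sub₀ h0, dA2_symm, dA1_symm,
      rootMultiplicity_dA2_sign_zpow hq N j i _ hj (by omega) (by omega)]
  · rw [mul_div_mul_left _ _ hs, ← zpow_sub₀ h0,
      rootMultiplicity_dA2_zpow hq N _ _ _ (by omega) (by omega) (by omega), dA1_flip]

/-- Proposition (prop: quiver iso)(ii), type A: (a) `π_A` maps `S₀(A_N^{(1)})` into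
`S₀(A_N^{(2)})` and induces a bijection onto the set of `∼`-classes of elements of
`S₀(A_N^{(2)})` (injectivity and surjectivity up to `∼`); (b) `π_A` preserves the
multiplicities of roots of the denominators, so it is a quiver isomorphism
`S₀(A_N^{(1)}) ≅ S₀(A_N^{(2)})`. -/
theorem statement4 (𝕜 : Type*) [Field 𝕜] [CharZero 𝕜] (q : 𝕜) (hq : Transcendental ℚ q)
    (N : ℤ) (hN : 2 ≤ N) :
    ((∀ v ∈ S01A q N, piA N v ∈ S02A q N) ∧
     (∀ v ∈ S01A q N, ∀ w ∈ S01A q N, simA N (piA N v) (piA N w) → v = w) ∧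
     (∀ w ∈ S02A q N, ∃ v ∈ S01A q N, simA N (piA N v) w)) ∧
    (∀ v ∈ S01A q N, ∀ w ∈ S01A q N,
      Polynomial.rootMultiplicity (w.2 / v.2) (dA1 q N v.1 w.1) =
        Polynomial.rootMultiplicity ((piA N w).2 / (piA N v).2)
          (dA2 q N (piA N v).1 (piA N w).1)) := by
  exact ⟨⟨piA_mem N, fun v hv w hw => piA_inj hq N v w hv hw, piA_surj N⟩,
    fun v hv w hw => rootMultiplicity_piA hq N v w hv hw⟩
end
end

section
/- Let 𝕜 be a field of characteristic zero, q ∈ 𝕜 nonzero, and N ≥ 2. For every (i,x) ∈ {1,…,N} × 𝕜^×, writing (i',x') = π_A(i,x), one has π_A(N+1−i, x·(−q)^{−(N+1)}) ∼ (i', x'·(−q^{N+1})^{−1}). -/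
/-!
The statement is a sign computation. Since `(-q)^{-(N+1)} = (-1)^{N+1} q^{-(N+1)}`
(`neg_zpow_dual`), duality before folding multiplies the parameter by `(-1)^{N+1}`, and `π_A`
contributes a further `(-1)^N` exactly when the index exceeds `⌊(N+1)/2⌋`. Unless
`i = N+1-i`, exactly one of `i`, `N+1-i` is folded, and both sides agree on the nose. At the
fixed point `i = (N+1)/2`, which exists only for odd `N`, neither index is folded and the
sides differ by `-1`; this is the identification built into `∼`.
-/

noncomputable section

variable {𝕜 : Type*} [Field 𝕜]

theorem neg_zpow_dual {F : Type*} [Field F] (q : F) (N : ℤ) :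
    (-q) ^ (-(N + 1)) = -((-1) ^ N * (q ^ (N + 1))⁻¹) := by
  rw [zpow_neg]
  rcases Int.even_or_odd N with h | h
  · rw [(h.add_one).neg_zpow, h.neg_one_zpow, inv_neg, one_mul]
  · rw [(h.add_one).neg_zpow, h.neg_one_zpow]
    ring

/-- Proposition (prop: quiver iso)(iii), type A: `π_A` commutes with taking left duals.
The left dual of `V(ϖ_i)_x` over `U_q'(A_N^{(1)})` is `V(ϖ_{N+1−i})_{x(−q)^{−(N+1)}}`, and
the left dual of `V(ϖ_{i'})_{x'}` over `U_q'(A_N^{(2)})` is `V(ϖ_{i'})_{x'(−q^{N+1})^{−1}}`;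
the statement is `π_A(N+1−i, x(−q)^{−(N+1)}) ∼ (i', x'(−q^{N+1})^{−1})`
where `(i',x') = π_A(i,x)`. -/
theorem statement6 (𝕜 : Type*) [Field 𝕜] [CharZero 𝕜] (q : 𝕜) (hq : q ≠ 0)
    (N : ℤ) (hN : 2 ≤ N) (i : ℤ) (x : 𝕜) (hi : 1 ≤ i ∧ i ≤ N) (hx : x ≠ 0) :
    simA N (piA N (N + 1 - i, x * (-q) ^ (-(N + 1))))
      ((piA N (i, x)).1, (piA N (i, x)).2 * (-(q ^ (N + 1)))⁻¹) := by
  have hsq : (-1 : 𝕜) ^ N * (-1) ^ N = 1 := by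
    rw [← mul_zpow]; simp
  rw [neg_zpow_dual, inv_neg]
  unfold simA piA
  dsimp only
  by_cases h1 : i ≤ (N + 1) / 2
  · by_cases h2 : N + 1 - i ≤ (N + 1) / 2
    · -- both indices unfolded: `N` is odd and `i` is the fixed point of `i ↦ N + 1 - i`
      have hodd : Odd N := ⟨i - 1, by omega⟩
      simp only [h1, h2, if_true]
      refine ⟨by omega, Or.inr ⟨hodd, by omega, ?_⟩⟩
      rw [hodd.neg_one_zpow]
      ring
    · simp only [h1, h2, if_true, if_false]
      refine ⟨by omega, Or.inl ?_⟩
      linear_combination (-x * (q ^ (N + 1))⁻¹) * hsq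
  · have h2 : N + 1 - i ≤ (N + 1) / 2 := by omega
    simp only [h1, h2, if_true, if_false]
    refine ⟨trivial, Or.inl ?_⟩
    ring
end
end

section
/- Let 𝕜 be a field of characteristic zero containing ι with ι² = −1, q ∈ 𝕜 nonzero, and N ≥ 4. For i ∈ {1,…,N} define i* := i except when N is odd and i ∈ {N−1, N}, in which case i* is the other element of {N−1, N}. Then for every (i,x) ∈ {1,…,N} × 𝕜^×, writing (i',x') = π_D(i,x), one has π_D(i*, x·q^{−(2N−2)}) ∼ (i', x'·((−1)^N q^{2N−2})^{−1}). -/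
/-!
Up to the common power of `q`, only signs have to be compared. For `i ≤ N - 2` the node is fixed
by `*` and the two sides differ by the factor `(-1) ^ N`, which `∼` ignores. For `i ∈ {N - 1, N}`
there is no freedom of sign, and what is needed is `(-1) ^ i* = (-1) ^ i * (-1) ^ N`: for `N` even
`i* = i`, while for `N` odd the swap `N - 1 ↔ N` changes the parity of the exponent.
-/

noncomputable section

variable {𝕜 : Type*} [Field 𝕜]

/-- The involution `i ↦ i*` on `{1,…,N}` for type `D_N`: `i* = i` except when `N` is odd
and `i ∈ {N−1, N}`, in which case `i*` is the other element of `{N−1, N}`. -/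
def istarD (N i : ℤ) : ℤ :=
  if Odd N ∧ (i = N - 1 ∨ i = N) then (if i = N then N - 1 else N) else i

/-- The sign of the dual spin node compensates the factor `(-1) ^ N` in the type `D_N^{(2)}`
duality shift. -/
lemma neg_one_zpow_istarD (K : Type*) [Field K] (N i : ℤ) (h : i = N - 1 ∨ i = N) :
    (-1 : K) ^ istarD N i = (-1) ^ i * (-1) ^ N := by
  rcases Int.even_or_odd N with hN | hN
  · rw [istarD, if_neg fun h' => Int.not_odd_iff_even.mpr hN h'.1, hN.neg_one_zpow, mul_one]
  · have hN' : Even (N - 1) := hN.sub_odd odd_one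
    rcases h with rfl | rfl
    · have hne : N - 1 ≠ N := by omega
      simp [istarD, hN, hne, hN.neg_one_zpow, hN'.neg_one_zpow]
    · simp [istarD, hN, hN.neg_one_zpow, hN'.neg_one_zpow]

/-- Proposition (prop: quiver iso)(iii), type D: `π_D` commutes with taking left duals.
The left dual of `V(ϖ_i)_x` over `U_q'(D_N^{(1)})` is `V(ϖ_{i*})_{x q^{−(2N−2)}}`, and the
left dual of `V(ϖ_{i'})_{x'}` over `U_q'(D_N^{(2)})` is `V(ϖ_{i'})_{x'((−1)^N q^{2N−2})^{−1}}`;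
the statement is `π_D(i*, x q^{−(2N−2)}) ∼ (i', x'((−1)^N q^{2N−2})^{−1})`
where `(i',x') = π_D(i,x)`. -/
theorem statement7 (𝕜 : Type*) [Field 𝕜] [CharZero 𝕜] (ι q : 𝕜)
    (hι : ι ^ 2 = -1) (hq : q ≠ 0)
    (N : ℤ) (hN : 4 ≤ N) (i : ℤ) (x : 𝕜) (hi : 1 ≤ i ∧ i ≤ N) (hx : x ≠ 0) :
    simD N (piD ι N (istarD N i, x * q ^ (-(2 * N - 2))))
      ((piD ι N (i, x)).1, (piD ι N (i, x)).2 * ((-1 : 𝕜) ^ N * q ^ (2 * N - 2))⁻¹) := by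
  have hinv : ((-1 : 𝕜) ^ N * q ^ (2 * N - 2))⁻¹ = (-1) ^ N * q ^ (-(2 * N - 2)) := by
    rw [mul_inv, ← zpow_neg q, ← inv_zpow, inv_neg_one]
  rw [hinv]
  by_cases h : i ≤ N - 2
  · have hstar : istarD N i = i := if_neg fun h' => by omega
    simp only [simD, piD, hstar, if_pos h, true_and]
    rcases Int.even_or_odd N with hN | hN
    · left
      rw [hN.neg_one_zpow]
      ring
    · right
      refine ⟨h, ?_⟩
      rw [hN.neg_one_zpow]
      ring
  · have hend : i = N - 1 ∨ i = N := by omega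
    have hstar : ¬ istarD N i ≤ N - 2 := by
      unfold istarD
      split_ifs <;> omega
    simp only [simD, piD, if_neg h, if_neg hstar, true_and]
    left
    rw [neg_one_zpow_istarD 𝕜 N i hend]
    ring
end
end

section
/- Let N ≥ 4, 1 ≤ k, l ≤ N and p ∈ ℤ. If d^{D(1)}_{k,l}((−q)^p) = 0, then p ≥ d(k,l) + 2. -/
/-!
Since `q` is transcendental, `p ↦ (-q) ^ p` is injective on `ℤ` (`zpow_neg_injective`). A zero of
the product `dD1 q N k l` at `(-q) ^ p` is a zero of one linear factor, so `p` equals the exponent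
of that factor. Every exponent increases with the index `s ≥ 1`, and at `s = 1` it is at least
`dynD N k l + 2`; for the second family of factors with `k, l ≤ N - 2` this is the inequality
`|k - l| ≤ 2 * N - 2 - k - l`.
-/

open Polynomial

noncomputable section

variable {𝕜 : Type*} [Field 𝕜]

/-- The graph distance `d(k,l)` between the nodes `k`, `l` of the Dynkin diagram of `D_N`
(the path `1–2–…–(N−2)` with both `N−1` and `N` joined to `N−2`). -/
def dynD (N k l : ℤ) : ℤ :=
  if k = l then 0
  else if (k = N - 1 ∨ k = N) ∧ (l = N - 1 ∨ l = N) then 2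
  else if (k = N - 1 ∨ k = N) ∨ (l = N - 1 ∨ l = N) then N - 1 - min k l
  else |k - l|

/-- A transcendental element is not a root of unity up to sign, so its negative has pairwise
distinct integer powers. -/
lemma zpow_neg_injective {K : Type*} [Field K] [CharZero K] {q : K} (hq : Transcendental ℚ q) :
    Function.Injective fun p : ℤ => (-q) ^ p := by
  have hq0 : -q ≠ 0 := by
    rintro h0
    exact hq (neg_eq_zero.mp h0 ▸ isAlgebraic_zero)
  -- `-q` is viewed in the group of units, where injectivity of powers means infinite order.
  have key : ¬ IsOfFinOrder (Units.mk0 (-q) hq0) := by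
    rw [isOfFinOrder_iff_pow_eq_one]
    rintro ⟨n, hn, h1⟩
    have h2 : (-q) ^ n = 1 := by simpa using congrArg Units.val h1
    have h3 : IsAlgebraic ℚ (-q) := IsAlgebraic.of_pow hn (h2 ▸ isAlgebraic_one)
    exact hq (by simpa using h3.neg)
  intro a b hab
  refine injective_zpow_iff_not_isOfFinOrder.mpr key (Units.ext ?_)
  simpa using hab

/-- Key step of Lemma (lem: k<l no poles), type D: if `d^{D(1)}_{k,l}((−q)^p) = 0` then
`p ≥ d(k,l) + 2`. -/
theorem statement9 (𝕜 : Type*) [Field 𝕜] [CharZero 𝕜] (q : 𝕜) (hq : Transcendental ℚ q)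
    (N : ℤ) (hN : 4 ≤ N) (k l p : ℤ) (hk : 1 ≤ k ∧ k ≤ N) (hl : 1 ≤ l ∧ l ≤ N)
    (h : (dD1 q N k l).eval ((-q) ^ p) = 0) :
    dynD N k l + 2 ≤ p := by
  have inj := zpow_neg_injective hq
  have hinj : ∀ e : ℤ, (-q) ^ p - (-q) ^ e = 0 → p = e := fun e he => inj (sub_eq_zero.mp he)
  unfold dD1 at h
  unfold dynD
  split_ifs at h with h1 h2 h3 <;>
    simp only [eval_prod, Finset.prod_eq_zero_iff, Finset.mem_Icc, eval_mul, eval_sub, eval_X,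
      eval_C, mul_eq_zero] at h <;>
    obtain ⟨s, ⟨hs, -⟩, h⟩ := h
  · rcases h with h | h
    all_goals
      have hp := hinj _ h
      rcases abs_cases (k - l) with ⟨h4, -⟩ | ⟨h4, -⟩ <;> split_ifs <;> omega
  all_goals
    have hp := hinj _ h
    split_ifs <;> omega
end
end

section
/- Let N ≥ 2 and let a, b ∈ ℤ and 1 ≤ i, j ≤ N with a ≡ i−1 (mod 2) and b ≡ j−1 (mod 2). Write (i',x') = π_A(i, (−q)^a) and (j',y') = π_A(j, (−q)^b). If d^{A(2)}_{i',j'}(y'/x') = 0, then b − a ≥ |i−j| + 2. -/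
/-!
By the definition of the denominator, a zero `z` of `dA2 q N i j` has the form
`(-q) ^ (|i - j| + 2 s)` or `(-1) ^ N * (-q) ^ (N + 1 + 2 s - i - j)` with `1 ≤ s ≤ min i j`
(`exists_of_eval_dA2_eq_zero`). In the situation of the theorem `z` is also a sign times
`(-q) ^ (b - a)`. Since `q` is transcendental, an identity between signed powers of `-q` forces
both the exponents and the signs to agree (`exponent_eq`), so `b - a` is determined.

If `i` and `j` lie on the same side of `(N + 1) / 2`, the sign of `z` is `1` and `|i' - j'|` equals
`|i - j|`. The first family of zeros gives `b - a = |i - j| + 2 s`, and the second gives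
`b - a = N + 1 + 2 s - i' - j'`, which is at least `|i - j| + 2` because
`max i' j' ≤ (N + 1) / 2`.

If they lie on opposite sides, the sign of `z` is `(-1) ^ N`. The first family of zeros is then
excluded: the sign forces `N` to be even, and then `b - a = |i + j - (N + 1)| + 2 s` contradicts
the congruence `b - a ≡ i + j (mod 2)`. The second family gives `b - a = 2 s ± (j - i)`, the sign
depending on whether `i` or `j` is reflected. When `j` is the larger index this is
`|i - j| + 2 s` directly, and the other case is symmetric.
-/


open Polynomial

noncomputable section

variable {𝕜 : Type*} [Field 𝕜]

lemma eq_zero_of_zpow_eq_one [CharZero 𝕜] {q : 𝕜} (hq : Transcendental ℚ q) {k : ℤ}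
    (h : q ^ k = 1) : k = 0 := by
  by_contra hk
  have h1 : q ^ k.natAbs = 1 := by
    rcases Int.natAbs_eq k with hk' | hk'
    · rw [hk', zpow_natCast] at h
      exact h
    · rw [hk', zpow_neg, zpow_natCast, inv_eq_one] at h
      exact h
  have h2 : IsIntegral ℚ q :=
    IsIntegral.of_pow (Int.natAbs_pos.mpr hk) (h1 ▸ isIntegral_one)
  exact hq h2.isAlgebraic

/-- Signed powers of `-q` determine both the exponent and the sign. -/
lemma exponent_eq [CharZero 𝕜] {q : 𝕜} (hq : Transcendental ℚ q) {e f : 𝕜} {m n : ℤ}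
    (he : e ^ 2 = 1) (hf : f ^ 2 = 1) (h : e * (-q) ^ m = f * (-q) ^ n) : m = n ∧ e = f := by
  have hq0 : q ≠ 0 := by rintro rfl; exact hq isAlgebraic_zero
  -- Squaring removes all the signs.
  have h1 : q ^ (2 * m) = q ^ (2 * n) := by
    have h2 := congrArg (· ^ 2) h
    simp only [mul_pow, he, hf, one_mul] at h2
    have h3 (k : ℤ) : ((-q) ^ k) ^ 2 = q ^ (2 * k) := by
      rw [← zpow_natCast, ← zpow_mul, mul_comm, zpow_mul, zpow_mul, zpow_natCast, neg_sq,
        zpow_ofNat]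
    rwa [h3, h3] at h2
  have h3 : q ^ (2 * m - 2 * n) = 1 := by
    rw [zpow_sub₀ hq0, h1, div_self (zpow_ne_zero _ hq0)]
  have h4 := eq_zero_of_zpow_eq_one hq h3
  obtain rfl : m = n := by omega
  exact ⟨rfl, mul_right_cancel₀ (zpow_ne_zero _ (neg_ne_zero.mpr hq0)) h⟩

lemma neg_one_zpow_sq (N : ℤ) : ((-1 : 𝕜) ^ N) ^ 2 = 1 := by
  rcases Int.even_or_odd N with h | h
  · simp [h.neg_one_zpow]
  · simp [h.neg_one_zpow]

lemma exists_of_eval_dA2_eq_zero {q : 𝕜} (hq : q ≠ 0) {N i j : ℤ} {z : 𝕜}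
    (h : (dA2 q N i j).eval z = 0) :
    ∃ s, 1 ≤ s ∧ (z = (-q) ^ (|i - j| + 2 * s) ∨
      z = (-1) ^ N * (-q) ^ (N + 1 + 2 * s - i - j)) := by
  rw [dA2, eval_prod, Finset.prod_eq_zero_iff] at h
  obtain ⟨s, hs, h⟩ := h
  refine ⟨s, (Finset.mem_Icc.mp hs).1, ?_⟩
  simp only [eval_mul, eval_sub, eval_add, eval_X, eval_C, mul_eq_zero] at h
  refine h.imp sub_eq_zero.mp fun h => ?_
  have hnq : -q ≠ 0 := neg_ne_zero.mpr hq
  have h1 : q ^ (N + 1) = -((-1) ^ N * (-q) ^ (N + 1)) := by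
    rw [zpow_add_one₀ hnq, ← mul_assoc, ← mul_zpow, zpow_add_one₀ hq]
    simp
  rw [eq_neg_of_add_eq_zero_left h, h1,
    show N + 1 + 2 * s - i - j = (N + 1) + (2 * s - i - j) by ring, zpow_add₀ hnq (N + 1)]
  ring

/-- The `t = 2` case of Lemma (lem: k<l no poles), type A: for `(i,(−q)^a)`, `(j,(−q)^b)`
in the connected component `S₀(A_N^{(1)})` (i.e. `a ≡ i−1`, `b ≡ j−1 (mod 2)`), with
`(i',x') = π_A(i,(−q)^a)` and `(j',y') = π_A(j,(−q)^b)`, if `d^{A(2)}_{i',j'}(y'/x') = 0`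
then `b − a ≥ |i−j| + 2`. -/
theorem statement10 (𝕜 : Type*) [Field 𝕜] [CharZero 𝕜] (q : 𝕜) (hq : Transcendental ℚ q)
    (N : ℤ) (hN : 2 ≤ N) (i j a b : ℤ) (hi : 1 ≤ i ∧ i ≤ N) (hj : 1 ≤ j ∧ j ≤ N)
    (ha : a % 2 = (i - 1) % 2) (hb : b % 2 = (j - 1) % 2)
    (h : (dA2 q N (piA N (i, (-q) ^ a)).1 (piA N (j, (-q) ^ b)).1).eval
        ((piA N (j, (-q) ^ b)).2 / (piA N (i, (-q) ^ a)).2) = 0) :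
    |i - j| + 2 ≤ b - a := by
  have hq0 : q ≠ 0 := by rintro rfl; exact hq isAlgebraic_zero
  have hnq : -q ≠ 0 := neg_ne_zero.mpr hq0
  have hsq := neg_one_zpow_sq (𝕜 := 𝕜) N
  have hs0 : (-1 : 𝕜) ^ N ≠ 0 := zpow_ne_zero _ (by simp)
  have hinv : ((-1 : 𝕜) ^ N)⁻¹ = (-1) ^ N :=
    inv_eq_of_mul_eq_one_left (by rw [← sq, hsq])
  have heven : (-1 : 𝕜) ^ N = 1 → N % 2 = 0 := by
    intro h1
    by_contra h2
    rw [Odd.neg_one_zpow (Int.odd_iff.mpr (by omega))] at h1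
    norm_num at h1
  obtain ⟨s, hs, h⟩ := exists_of_eval_dA2_eq_zero hq0 h
  simp only [abs_eq_max_neg] at h ⊢
  unfold piA at h
  by_cases hi' : i ≤ (N + 1) / 2 <;> by_cases hj' : j ≤ (N + 1) / 2 <;>
    simp only [hi', hj', if_true, if_false] at h
  · rw [← zpow_sub₀ hnq] at h
    rcases h with h | h
    · have := (exponent_eq hq (one_pow 2) (one_pow 2) (by simpa using h)).1
      omega
    · have := (exponent_eq hq (one_pow 2) hsq (by simpa using h)).1
      omega
  · rw [mul_div_assoc, ← zpow_sub₀ hnq] at h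
    rcases h with h | h
    · obtain ⟨h1, h2⟩ := exponent_eq hq hsq (one_pow 2) (by simpa using h)
      have := heven h2
      omega
    · have := (exponent_eq hq hsq hsq h).1
      omega
  · rw [div_mul_eq_div_div_swap, ← zpow_sub₀ hnq, div_eq_mul_inv, hinv, mul_comm] at h
    rcases h with h | h
    · obtain ⟨h1, h2⟩ := exponent_eq hq hsq (one_pow 2) (by simpa using h)
      have := heven h2
      omega
    · have := (exponent_eq hq hsq hsq h).1
      omega
  · rw [mul_div_mul_left _ _ hs0, ← zpow_sub₀ hnq] at h
    rcases h with h | h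
    · have := (exponent_eq hq (one_pow 2) (one_pow 2) (by simpa using h)).1
      omega
    · have := (exponent_eq hq (one_pow 2) hsq (by simpa using h)).1
      omega
end
end

section
/- Let N ≥ 4 and let a, b ∈ ℤ and 1 ≤ k, l ≤ N, with a ≡ N−1−k (mod 2) if k ≤ N−1 and a even if k = N, and with b ≡ N−1−l (mod 2) if l ≤ N−1 and b even if l = N. Write (k',x') = π_D(k, (−q)^a) and (l',y') = π_D(l, (−q)^b). If d^{D(2)}_{k',l'}(y'/x') = 0, then b − a ≥ d(k,l) + 2. -/
/-!
Put `p = -q`. Up to fourth roots of unity, the argument `y' / x'` of the denominator is `p ^ (b - a)`,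
and each root of the denominator is `p ^ e` for an exponent `e` read off from the corresponding
factor. Since `p` is not a root of unity, comparing fourth powers forces `b - a = e`
(`exponent_eq_of_pow_four_eq`). In every case except `k, l ∈ {N - 1, N}` with `k ≠ l`, all these
exponents are at least `d(k,l) + 2`. In the exceptional case the exponents are `2 s` with
`1 ≤ s ≤ N - 1`, and only `s = 1` has to be excluded: there the signs disagree, because the root is
`q ^ 2 = p ^ 2` while `y' / x' = -p ^ (b - a)`.
-/

open Polynomial

noncomputable section

variable {𝕜 : Type*} [Field 𝕜]

/-- The powers of `-q` are pairwise distinct for `q` transcendental. -/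
lemma neg_zpow_injective [CharZero 𝕜] {q : 𝕜} (hq : Transcendental ℚ q) :
    Function.Injective fun m : ℤ => (-q) ^ m := by
  have hp : Transcendental ℚ (-q) := fun h => hq (by simpa using h.neg)
  have hp0 : -q ≠ 0 := fun h => hp (h ▸ isAlgebraic_zero)
  have hpow : ∀ n : ℕ, 0 < n → (-q) ^ n ≠ 1 := fun n hn h =>
    hp.pow hn (h ▸ isAlgebraic_one)
  intro m n hmn
  by_contra hne
  have h1 : (-q) ^ (m - n) = 1 := by
    rw [zpow_sub₀ hp0, div_eq_one_iff_eq (zpow_ne_zero _ hp0)]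
    exact hmn
  have h2 : (-q) ^ (m - n).natAbs = 1 := by
    rcases Int.natAbs_eq (m - n) with h | h
    · rw [h, zpow_natCast] at h1
      exact h1
    · rw [h, zpow_neg, zpow_natCast, inv_eq_one] at h1
      exact h1
  exact hpow _ (by omega) h2

/-- The exponent of `-q` is determined even when only fourth powers are compared, so the fourth
roots of unity `x`, `y` coming from `piD` play no role. -/
lemma exponent_eq_of_pow_four_eq [CharZero 𝕜] {q x y : 𝕜} (hq : Transcendental ℚ q)
    (hx : x ^ 4 = 1) (hy : y ^ 4 = 1) {a b e : ℤ}
    (h : (y * (-q) ^ b / (x * (-q) ^ a)) ^ 4 = ((-q) ^ e) ^ 4) : b - a = e := by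
  have hp0 : -q ≠ 0 := fun h0 => hq (by rw [neg_eq_zero.mp h0]; exact isAlgebraic_zero)
  rw [div_pow, mul_pow, mul_pow, hx, hy, one_mul, one_mul, ← div_pow, ← zpow_sub₀ hp0,
    ← zpow_natCast, ← zpow_natCast, ← zpow_mul, ← zpow_mul] at h
  have := neg_zpow_injective hq h
  push_cast at this
  omega

lemma neg_sq_zpow_sq (q : 𝕜) (e : ℤ) : ((-q ^ 2) ^ e) ^ 2 = ((-q) ^ e) ^ 4 := by
  have h1 : ((-q ^ 2) ^ e) ^ 2 = ((-q ^ 2) ^ 2) ^ e := by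
    rw [pow_two, pow_two (-q ^ 2), mul_zpow]
  have h2 : ((-q) ^ e) ^ 4 = ((-q) ^ 4) ^ e := by
    rw [← zpow_natCast, ← zpow_natCast, zpow_comm]
  rw [h1, h2]
  congr 1
  ring

lemma zpow_pow_four_eq_one {u : 𝕜} (hu : u ^ 4 = 1) (n : ℤ) : (u ^ n) ^ 4 = 1 := by
  rw [← zpow_natCast, zpow_comm, zpow_natCast, hu, one_zpow]

/-- The `t = 2` case of Lemma (lem: k<l no poles), type D: for `(k,(−q)^a)`, `(l,(−q)^b)`
in the connected component `S₀(D_N^{(1)})`, with `(k',x') = π_D(k,(−q)^a)` and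
`(l',y') = π_D(l,(−q)^b)`, if `d^{D(2)}_{k',l'}(y'/x') = 0` then `b − a ≥ d(k,l) + 2`. -/
theorem statement11 (𝕜 : Type*) [Field 𝕜] [CharZero 𝕜] (q ι : 𝕜)
    (hq : Transcendental ℚ q) (hι : ι ^ 2 = -1) (N : ℤ) (hN : 4 ≤ N)
    (k l a b : ℤ) (hk : 1 ≤ k ∧ k ≤ N) (hl : 1 ≤ l ∧ l ≤ N)
    (ha1 : k ≤ N - 1 → a % 2 = (N - 1 - k) % 2) (ha2 : k = N → a % 2 = 0)
    (hb1 : l ≤ N - 1 → b % 2 = (N - 1 - l) % 2) (hb2 : l = N → b % 2 = 0)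
    (h : (dD2 q N (piD ι N (k, (-q) ^ a)).1 (piD ι N (l, (-q) ^ b)).1).eval
        ((piD ι N (l, (-q) ^ b)).2 / (piD ι N (k, (-q) ^ a)).2) = 0) :
    dynD N k l + 2 ≤ b - a := by
  have hι4 : ι ^ 4 = 1 := by linear_combination (ι ^ 2 - 1) * hι
  have hs4 : (-1 : 𝕜) ^ 4 = 1 := by norm_num
  have key : ∀ {x y : 𝕜}, x ^ 4 = 1 → y ^ 4 = 1 → ∀ e : ℤ,
      ((y * (-q) ^ b / (x * (-q) ^ a)) ^ 2) ^ 2 = ((-q ^ 2) ^ e) ^ 2 → b - a = e := by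
    intro x y hx hy e he
    rw [neg_sq_zpow_sq, ← pow_mul] at he
    exact exponent_eq_of_pow_four_eq hq hx hy he
  have hιn := zpow_pow_four_eq_one hι4
  have hsn := zpow_pow_four_eq_one hs4
  by_cases hkN : k ≤ N - 2 <;> by_cases hlN : l ≤ N - 2
  · simp only [piD, hkN, hlN, dD2, and_self, if_true, eval_prod, Finset.prod_eq_zero_iff,
      Finset.mem_Icc, eval_mul, eval_sub, eval_pow, eval_X, eval_C, mul_eq_zero,
      sub_eq_zero] at h
    obtain ⟨s, hs, h | h⟩ := h
    · have := key (hιn _) (hιn _) _ (congrArg (· ^ 2) h)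
      grind [dynD]
    · have := key (hιn _) (hιn _) _ (congrArg (· ^ 2) h)
      grind [dynD]
  · have hN2 : ¬ N - 1 ≤ N - 2 := by omega
    simp only [piD, hkN, hlN, hN2, dD2, and_false, true_or, if_false, if_true, eval_prod,
      Finset.prod_eq_zero_iff, Finset.mem_Icc, eval_add, eval_pow, eval_X, eval_C,
      add_eq_zero_iff_eq_neg] at h
    obtain ⟨s, hs, h⟩ := h
    have := key (hιn _) (hsn _) _ ((congrArg (· ^ 2) h).trans (neg_sq _))
    grind [dynD]
  · have hN2 : ¬ N - 1 ≤ N - 2 := by omega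
    simp only [piD, hkN, hlN, hN2, dD2, false_and, or_true, if_false, if_true, eval_prod,
      Finset.prod_eq_zero_iff, Finset.mem_Icc, eval_add, eval_pow, eval_X, eval_C,
      add_eq_zero_iff_eq_neg] at h
    obtain ⟨s, hs, h⟩ := h
    have := key (hsn _) (hιn _) _ ((congrArg (· ^ 2) h).trans (neg_sq _))
    grind [dynD]
  · have hN2 : ¬ N - 1 ≤ N - 2 := by omega
    simp only [piD, hkN, hlN, hN2, dD2, and_self, or_self, if_false, eval_prod,
      Finset.prod_eq_zero_iff, Finset.mem_Icc, eval_add, eval_X, eval_C,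
      add_eq_zero_iff_eq_neg] at h
    obtain ⟨s, hs, h⟩ := h
    have hba : b - a = 2 * s := by
      refine exponent_eq_of_pow_four_eq hq (hsn k) (hsn l) ?_
      rw [h, mul_comm 2 s, zpow_mul, zpow_ofNat]
      linear_combination (((-q ^ 2) ^ s) ^ 2 + ((-q) ^ s) ^ 4) * neg_sq_zpow_sq q s
    by_cases hkl : k = l
    · grind [dynD]
    -- For `k ≠ l` the value `s = 1` would give `(-1) ^ l = (-1) ^ k` with `k`, `l` consecutive.
    have hs1 : s ≠ 1 := by
      rintro rfl
      have hp0 : -q ≠ 0 := fun h0 => hq (by rw [neg_eq_zero.mp h0]; exact isAlgebraic_zero)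
      have hpa : (-q) ^ a ≠ 0 := zpow_ne_zero _ hp0
      have hu : ∀ n : ℤ, (-1 : 𝕜) ^ n ≠ 0 := fun n => zpow_ne_zero _ (by norm_num)
      have hb : (-q) ^ b = (-q) ^ a * q ^ 2 := by
        rw [show b = a + 2 by omega, zpow_add₀ hp0, zpow_ofNat, neg_sq]
      rw [div_eq_iff (mul_ne_zero (hu k) hpa), hb, zpow_one, neg_neg] at h
      have hsign : (-1 : 𝕜) ^ l = (-1) ^ k := by
        refine mul_right_cancel₀ (mul_ne_zero hpa (pow_ne_zero 2 (neg_ne_zero.mp hp0))) ?_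
        linear_combination h
      have hcons : l = k + 1 ∨ k = l + 1 := by omega
      rcases hcons with rfl | rfl
      · rw [zpow_add_one₀ (by norm_num), mul_neg_one] at hsign
        exact hu k (self_eq_neg.mp hsign.symm)
      · rw [zpow_add_one₀ (by norm_num), mul_neg_one] at hsign
        exact hu l (self_eq_neg.mp hsign)
    grind [dynD]
end
end

section
/- Let N ≥ 2 and let i, j, s, t be integers with 1 ≤ j ≤ i ≤ N, s < t, t−s ≡ i−j (mod 2), i−j+2 ≤ t−s ≤ min(i+j, 2(N+1)−i−j), and suppose it is not the case that both i+j = N+1 and t−s = N+1. Then there exists c ∈ ℤ such that either (a) c−i+2 ≤ s ≤ c+i, c−j+2 ≤ t ≤ c+j, s ≡ c+i (mod 2) and t ≡ c+j (mod 2), or (b) c+i−2N ≤ s ≤ c−i, c+j−2N ≤ t ≤ c−j, s ≡ c−i (mod 2) and t ≡ c−j (mod 2). -/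
/-- The type A case of Lemma (lem:3) in combinatorial form: if the denominator
`d^{A(1)}_{i,j}(z)` has a zero at `z = (−q)^{t−s}` (encoded by the hypotheses on `t−s`)
and `V(ϖ_i)_{(−q)^s}`, `V(ϖ_j)_{(−q)^t}` are not dual to each other, then there is a
height function (encoded by `c`) for one of the two equioriented `A_N` quivers such that
`(i,s)` and `(j,t)` are both vertices of the Auslander–Reiten quiver: for the quiver
`N → ⋯ → 1` with `ξ_k = c+k` one has `m_k = k−1` (alternative (a)), and for the quiver
`1 → ⋯ → N` with `ξ_k = c−k` one has `m_k = N−k` (alternative (b)); the vertex condition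
is `ξ_k − 2m_k ≤ p ≤ ξ_k`, `p ≡ ξ_k (mod 2)`. -/
theorem statement13 (N i j s t : ℤ) (hN : 2 ≤ N) (h1 : 1 ≤ j) (h2 : j ≤ i) (h3 : i ≤ N)
    (hst : s < t) (hpar : (t - s) % 2 = (i - j) % 2)
    (hlo : i - j + 2 ≤ t - s) (hhi : t - s ≤ min (i + j) (2 * (N + 1) - i - j))
    (hnd : ¬(i + j = N + 1 ∧ t - s = N + 1)) :
    ∃ c : ℤ,
      (c - i + 2 ≤ s ∧ s ≤ c + i ∧ c - j + 2 ≤ t ∧ t ≤ c + j ∧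
        s % 2 = (c + i) % 2 ∧ t % 2 = (c + j) % 2) ∨
      (c + i - 2 * N ≤ s ∧ s ≤ c - i ∧ c + j - 2 * N ≤ t ∧ t ≤ c - j ∧
        s % 2 = (c - i) % 2 ∧ t % 2 = (c - j) % 2) := by
  have hhi1 := hhi.trans (min_le_left _ _)
  have hhi2 := hhi.trans (min_le_right _ _)
  by_cases h : t - s ≤ i + j - 2
  -- The bound is exactly what makes `c = t - j`, the least value allowed by `(j, t)`, admissible.
  · exact ⟨t - j, Or.inl (by omega)⟩
  -- By parity `t - s = i + j`. Then `c = t + j` requires `t - s ≤ 2 * N - i - j`, which by parity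
  -- could only fail if `t - s = 2 * (N + 1) - i - j`, the dual case excluded by `hnd`.
  · exact ⟨t + j, Or.inr (by omega)⟩
end
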